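/- Consider the second-order 3D reconstruction: V^x(x,y,z) = [V_x^1 + Δ_xV_x^1·x](y − 1/2)(z − 1/2) + [V_x^2 + Δ_xV_x^2·x](y + 1/2)(1/2 − z) + [V_x^3 + Δ_xV_x^3·x](1/2 − y)(z + 1/2) + [V_x^4 + Δ_xV_x^4·x](y + 1/2)(z + 1/2) + a_yy(1 − 4y²) + a_zz(1 − 4z²) + a_yyz·z(1 − 4y²) + a_yzz·y(1 − 4z²), with the cyclic analogues for V^y and V^z given in the context. Choose the interior coefficients as: b_xxz = c_xxy = (−Δ_xV_x^1 + Δ_xV_x^2 + Δ_xV_x^3 − Δ_xV_x^4)/8; a_yyz = c_xyy = (−Δ_yV_y^1 + Δ_yV_y^2 + Δ_yV_y^3 − Δ_yV_y^4)/8; a_yzz = b_xzz = (−Δ_zV_z^1 + Δ_zV_z^2 + Δ_zV_z^3 − Δ_zV_z^4)/8; b_xx = −Δ_xR^z/8 + (Δ_xV_x^1 − Δ_xV_x^2 + Δ_xV_x^3 − Δ_xV_x^4)/16; c_xx = Δ_xR^y/8 + (Δ_xV_x^1 + Δ_xV_x^2 − Δ_xV_x^3 − Δ_xV_x^4)/16;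 a_yy = Δ_yR^z/8 + (Δ_yV_y^1 + Δ_yV_y^2 − Δ_yV_y^3 − Δ_yV_y^4)/16; c_yy = −Δ_yR^x/8 + (Δ_yV_y^1 − Δ_yV_y^2 + Δ_yV_y^3 − Δ_yV_y^4)/16; a_zz = −Δ_zR^y/8 + (Δ_zV_z^1 − Δ_zV_z^2 + Δ_zV_z^3 − Δ_zV_z^4)/16; b_zz = Δ_zR^x/8 + (Δ_zV_z^1 + Δ_zV_z^2 − Δ_zV_z^3 − Δ_zV_z^4)/16. Then for every (x,y,z) ∈ ℝ³ the curl of V equals exactly: (∇×V)_x = (1/2)(V_y^1 − V_y^2 + V_y^3 − V_y^4 − V_z^1 − V_z^2 + V_z^3 + V_z^4) + (−V_y^1 + V_y^2 + V_y^3 − V_y^4 + V_z^1 − V_z^2 − V_z^3 + V_z^4)·x + Δ_yR^x·y + Δ_zR^x·z; (∇×V)_y = (1/2)(V_z^1 − V_z^2 + V_z^3 − V_z^4 − V_x^1 − V_x^2 + V_x^3 + V_x^4) + (−V_z^1 + V_z^2 + V_z^3 − V_z^4 + V_x^1 − V_x^2 − V_x^3 + V_x^4)·y + Δ_xR^y·x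 + Δ_zR^y·z; (∇×V)_z = (1/2)(V_x^1 − V_x^2 + V_x^3 − V_x^4 − V_y^1 − V_y^2 + V_y^3 + V_y^4) + (−V_x^1 + V_x^2 + V_x^3 − V_x^4 + V_y^1 − V_y^2 − V_y^3 + V_y^4)·z + Δ_xR^z·x + Δ_yR^z·y. -/

import Mathlib

/-- x-component of the second-order 3D reconstruction (eqn. 3.10). -/
noncomputable def W2x (vx1 vx2 vx3 vx4 dx1 dx2 dx3 dx4 ayy azz ayyz ayzz x y z : ℝ) : ℝ :=
  (vx1 + dx1 * x) * (y - 1 / 2) * (z - 1 / 2) + (vx2 + dx2 * x) * (y + 1 / 2) * (1 / 2 - z) +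
    (vx3 + dx3 * x) * (1 / 2 - y) * (z + 1 / 2) + (vx4 + dx4 * x) * (y + 1 / 2) * (z + 1 / 2) +
    ayy * (1 - 4 * y ^ 2) + azz * (1 - 4 * z ^ 2) +
    ayyz * z * (1 - 4 * y ^ 2) + ayzz * y * (1 - 4 * z ^ 2)

/-- y-component of the second-order 3D reconstruction (eqn. 3.11). -/
noncomputable def W2y (vy1 vy2 vy3 vy4 dy1 dy2 dy3 dy4 bxx bzz bxxz bxzz x y z : ℝ) : ℝ :=
  (vy1 + dy1 * y) * (z - 1 / 2) * (x - 1 / 2) + (vy2 + dy2 * y) * (z + 1 / 2) * (1 / 2 - x) +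
    (vy3 + dy3 * y) * (1 / 2 - z) * (x + 1 / 2) + (vy4 + dy4 * y) * (z + 1 / 2) * (x + 1 / 2) +
    bxx * (1 - 4 * x ^ 2) + bzz * (1 - 4 * z ^ 2) +
    bxxz * z * (1 - 4 * x ^ 2) + bxzz * x * (1 - 4 * z ^ 2)

/-- z-component of the second-order 3D reconstruction (eqn. 3.12). -/
noncomputable def W2z (vz1 vz2 vz3 vz4 dz1 dz2 dz3 dz4 cxx cyy cxxy cxyy x y z : ℝ) : ℝ :=
  (vz1 + dz1 * z) * (x - 1 / 2) * (y - 1 / 2) + (vz2 + dz2 * z) * (x + 1 / 2) * (1 / 2 - y) +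
    (vz3 + dz3 * z) * (1 / 2 - x) * (y + 1 / 2) + (vz4 + dz4 * z) * (x + 1 / 2) * (y + 1 / 2) +
    cxx * (1 - 4 * x ^ 2) + cyy * (1 - 4 * y ^ 2) +
    cxxy * y * (1 - 4 * x ^ 2) + cxyy * x * (1 - 4 * y ^ 2)

/-!
The reconstruction is invariant under the cyclic shift `x → y → z → x`, so a single component of
the curl has to be computed. Along a transverse coordinate `s` each component of the field is affine
plus a multiple of the bubble `1 - 4 s ^ 2`, whose derivative `-8 s` is linear. In the `x`-component
of the curl, the edge values contribute exactly the prescribed constant and coefficient of `x`.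
The moments along the edges contribute multiples of `y`, `z`, `x y` and `x z`, each of which is
corrected by the derivative of one bubble term. What remains is `(c_xxy - b_xxz) (1 - 4 x ^ 2)`,
which vanishes because these two coefficients are chosen equal.
-/

section TransverseDerivatives

theorem hasDerivAt_affine_add_bubble {𝕜 : Type*} [NontriviallyNormedField 𝕜] (a b c t : 𝕜) :
    HasDerivAt (fun s => a + b * s + c * (1 - 4 * s ^ 2)) (b - 8 * c * t) t := by
  have affine : HasDerivAt (fun s => a + b * s) b t := (hasDerivAt_const_mul b).const_add a
  have bubble : HasDerivAt (fun s => 1 - 4 * s ^ 2) (-(4 * (2 * t))) t := by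
    simpa using ((hasDerivAt_pow 2 t).const_mul 4).const_sub 1
  exact (affine.add (bubble.const_mul c)).congr_deriv (by ring)

variable (v1 v2 v3 v4 d1 d2 d3 d4 ayy azz ayyz ayzz x y z : ℝ)

theorem W2x_eq_affine_add_bubble :
    W2x v1 v2 v3 v4 d1 d2 d3 d4 ayy azz ayyz ayzz x y z =
      ((v1 + v2 + (d1 + d2) * x) / 2 * (1 / 2 - z) + (v3 + v4 + (d3 + d4) * x) / 2 * (1 / 2 + z) +
          azz * (1 - 4 * z ^ 2)) +
        ((v2 - v1 + (d2 - d1) * x) * (1 / 2 - z) + (v4 - v3 + (d4 - d3) * x) * (1 / 2 + z) +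
          ayzz * (1 - 4 * z ^ 2)) * y +
        (ayy + ayyz * z) * (1 - 4 * y ^ 2) := by
  rw [W2x]
  ring

theorem hasDerivAt_W2x_y :
    HasDerivAt (fun y' => W2x v1 v2 v3 v4 d1 d2 d3 d4 ayy azz ayyz ayzz x y' z)
      ((v2 - v1 + (d2 - d1) * x) * (1 / 2 - z) + (v4 - v3 + (d4 - d3) * x) * (1 / 2 + z) +
        ayzz * (1 - 4 * z ^ 2) - 8 * (ayy + ayyz * z) * y) y := by
  simp only [W2x_eq_affine_add_bubble]
  exact hasDerivAt_affine_add_bubble _ _ _ y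

theorem W2x_swap_yz :
    W2x v1 v2 v3 v4 d1 d2 d3 d4 ayy azz ayyz ayzz x y z =
      W2x v1 v3 v2 v4 d1 d3 d2 d4 azz ayy ayzz ayyz x z y := by
  simp only [W2x]
  ring

theorem hasDerivAt_W2x_z :
    HasDerivAt (fun z' => W2x v1 v2 v3 v4 d1 d2 d3 d4 ayy azz ayyz ayzz x y z')
      ((v3 - v1 + (d3 - d1) * x) * (1 / 2 - y) + (v4 - v2 + (d4 - d2) * x) * (1 / 2 + y) +
        ayyz * (1 - 4 * y ^ 2) - 8 * (azz + ayzz * y) * z) z := by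
  -- Fixing `v1 v2` keeps this involutive rewrite from looping.
  simp only [W2x_swap_yz v1 v2]
  exact hasDerivAt_W2x_y v1 v3 v2 v4 d1 d3 d2 d4 azz ayy ayzz ayyz x z y

end TransverseDerivatives

section CyclicSymmetry

variable (v1 v2 v3 v4 d1 d2 d3 d4 : ℝ)

theorem W2y_eq_W2x (bxx bzz bxxz bxzz x y z : ℝ) :
    W2y v1 v2 v3 v4 d1 d2 d3 d4 bxx bzz bxxz bxzz x y z =
      W2x v1 v2 v3 v4 d1 d2 d3 d4 bzz bxx bxzz bxxz y z x := by
  rw [W2y, W2x]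
  ring

theorem W2z_eq_W2x (cxx cyy cxxy cxyy x y z : ℝ) :
    W2z v1 v2 v3 v4 d1 d2 d3 d4 cxx cyy cxxy cxyy x y z =
      W2x v1 v2 v3 v4 d1 d2 d3 d4 cxx cyy cxxy cxyy z x y :=
  rfl

end CyclicSymmetry

section Curl

variable (vy1 vy2 vy3 vy4 vz1 vz2 vz3 vz4 dy1 dy2 dy3 dy4 dz1 dz2 dz3 dz4 : ℝ)

theorem deriv_W2z_sub_deriv_W2y_eq_expansion
    (bxx bzz bxxz bxzz cxx cyy cxxy cxyy x y z : ℝ) :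
    deriv (fun y' => W2z vz1 vz2 vz3 vz4 dz1 dz2 dz3 dz4 cxx cyy cxxy cxyy x y' z) y -
        deriv (fun z' => W2y vy1 vy2 vy3 vy4 dy1 dy2 dy3 dy4 bxx bzz bxxz bxzz x y z') z =
      (1 / 2) * (vy1 - vy2 + vy3 - vy4 - vz1 - vz2 + vz3 + vz4) +
        (-vy1 + vy2 + vy3 - vy4 + vz1 - vz2 - vz3 + vz4) * x +
        ((dy1 - dy2 + dy3 - dy4) / 2 - 8 * cyy) * y +
        (8 * bzz - (dz1 + dz2 - dz3 - dz4) / 2) * z +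
        ((-dy1 + dy2 + dy3 - dy4) - 8 * cxyy) * (x * y) +
        (8 * bxzz - (-dz1 + dz2 + dz3 - dz4)) * (x * z) +
        (cxxy - bxxz) * (1 - 4 * x ^ 2) := by
  simp only [W2y_eq_W2x, W2z_eq_W2x, (hasDerivAt_W2x_y ..).deriv, (hasDerivAt_W2x_z ..).deriv]
  ring

theorem deriv_W2z_sub_deriv_W2y
    {dyRx dzRx bzz bxxz bxzz cyy cxxy cxyy : ℝ} (bxx cxx : ℝ)
    (hxx : cxxy = bxxz)
    (hcxyy : cxyy = (-dy1 + dy2 + dy3 - dy4) / 8)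
    (hbxzz : bxzz = (-dz1 + dz2 + dz3 - dz4) / 8)
    (hcyy : cyy = -dyRx / 8 + (dy1 - dy2 + dy3 - dy4) / 16)
    (hbzz : bzz = dzRx / 8 + (dz1 + dz2 - dz3 - dz4) / 16) (x y z : ℝ) :
    deriv (fun y' => W2z vz1 vz2 vz3 vz4 dz1 dz2 dz3 dz4 cxx cyy cxxy cxyy x y' z) y -
        deriv (fun z' => W2y vy1 vy2 vy3 vy4 dy1 dy2 dy3 dy4 bxx bzz bxxz bxzz x y z') z =
      (1 / 2) * (vy1 - vy2 + vy3 - vy4 - vz1 - vz2 + vz3 + vz4) +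
        (-vy1 + vy2 + vy3 - vy4 + vz1 - vz2 - vz3 + vz4) * x + dyRx * y + dzRx * z := by
  have y_coeff : (dy1 - dy2 + dy3 - dy4) / 2 - 8 * cyy = dyRx := by linarith
  have z_coeff : 8 * bzz - (dz1 + dz2 - dz3 - dz4) / 2 = dzRx := by linarith
  have xy_coeff : (-dy1 + dy2 + dy3 - dy4) - 8 * cxyy = 0 := by linarith
  have xz_coeff : 8 * bxzz - (-dz1 + dz2 + dz3 - dz4) = 0 := by linarith
  rw [deriv_W2z_sub_deriv_W2y_eq_expansion, y_coeff, z_coeff, xy_coeff, xz_coeff, hxx]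
  ring

end Curl

/-- with the interior coefficients chosen as in eqns. (3.16) and
(3.17), the curl of the second-order 3D reconstruction matches the prescribed
linear curl field exactly at every point of space. -/
theorem stmt_10
    (vx1 vx2 vx3 vx4 vy1 vy2 vy3 vy4 vz1 vz2 vz3 vz4
      dx1 dx2 dx3 dx4 dy1 dy2 dy3 dy4 dz1 dz2 dz3 dz4
      dyRx dzRx dxRy dzRy dxRz dyRz
      ayy azz ayyz ayzz bxx bzz bxxz bxzz cxx cyy cxxy cxyy : ℝ)
    (hbxxz : bxxz = (-dx1 + dx2 + dx3 - dx4) / 8)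
    (hcxxy : cxxy = (-dx1 + dx2 + dx3 - dx4) / 8)
    (hayyz : ayyz = (-dy1 + dy2 + dy3 - dy4) / 8)
    (hcxyy : cxyy = (-dy1 + dy2 + dy3 - dy4) / 8)
    (hayzz : ayzz = (-dz1 + dz2 + dz3 - dz4) / 8)
    (hbxzz : bxzz = (-dz1 + dz2 + dz3 - dz4) / 8)
    (hbxx : bxx = -dxRz / 8 + (dx1 - dx2 + dx3 - dx4) / 16)
    (hcxx : cxx = dxRy / 8 + (dx1 + dx2 - dx3 - dx4) / 16)
    (hayy : ayy = dyRz / 8 + (dy1 + dy2 - dy3 - dy4) / 16)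
    (hcyy : cyy = -dyRx / 8 + (dy1 - dy2 + dy3 - dy4) / 16)
    (hazz : azz = -dzRy / 8 + (dz1 - dz2 + dz3 - dz4) / 16)
    (hbzz : bzz = dzRx / 8 + (dz1 + dz2 - dz3 - dz4) / 16) :
    ∀ x y z : ℝ,
      (deriv (fun y' : ℝ => W2z vz1 vz2 vz3 vz4 dz1 dz2 dz3 dz4 cxx cyy cxxy cxyy x y' z) y -
          deriv (fun z' : ℝ => W2y vy1 vy2 vy3 vy4 dy1 dy2 dy3 dy4 bxx bzz bxxz bxzz x y z') z =
        (1 / 2) * (vy1 - vy2 + vy3 - vy4 - vz1 - vz2 + vz3 + vz4) +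
          (-vy1 + vy2 + vy3 - vy4 + vz1 - vz2 - vz3 + vz4) * x + dyRx * y + dzRx * z) ∧
      (deriv (fun z' : ℝ => W2x vx1 vx2 vx3 vx4 dx1 dx2 dx3 dx4 ayy azz ayyz ayzz x y z') z -
          deriv (fun x' : ℝ => W2z vz1 vz2 vz3 vz4 dz1 dz2 dz3 dz4 cxx cyy cxxy cxyy x' y z) x =
        (1 / 2) * (vz1 - vz2 + vz3 - vz4 - vx1 - vx2 + vx3 + vx4) +
          (-vz1 + vz2 + vz3 - vz4 + vx1 - vx2 - vx3 + vx4) * y + dxRy * x + dzRy * z) ∧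
      (deriv (fun x' : ℝ => W2y vy1 vy2 vy3 vy4 dy1 dy2 dy3 dy4 bxx bzz bxxz bxzz x' y z) x -
          deriv (fun y' : ℝ => W2x vx1 vx2 vx3 vx4 dx1 dx2 dx3 dx4 ayy azz ayyz ayzz x y' z) y =
        (1 / 2) * (vx1 - vx2 + vx3 - vx4 - vy1 - vy2 + vy3 + vy4) +
          (-vx1 + vx2 + vx3 - vx4 + vy1 - vy2 - vy3 + vy4) * z + dxRz * x + dyRz * y) := by
  intro x y z
  have curl_x := deriv_W2z_sub_deriv_W2y vy1 vy2 vy3 vy4 vz1 vz2 vz3 vz4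
    dy1 dy2 dy3 dy4 dz1 dz2 dz3 dz4 bxx cxx (hcxxy.trans hbxxz.symm) hcxyy hbxzz hcyy hbzz x y z
  have curl_y := deriv_W2z_sub_deriv_W2y vz1 vz2 vz3 vz4 vx1 vx2 vx3 vx4
    dz1 dz2 dz3 dz4 dx1 dx2 dx3 dx4 cyy ayy (hayyz.trans hcxyy.symm) hayzz hcxxy hazz hcxx y z x
  have curl_z := deriv_W2z_sub_deriv_W2y vx1 vx2 vx3 vx4 vy1 vy2 vy3 vy4
    dx1 dx2 dx3 dx4 dy1 dy2 dy3 dy4 azz bzz (hbxzz.trans hayzz.symm) hbxxz hayyz hbxx hayy z x y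
  simp only [W2y_eq_W2x, W2z_eq_W2x] at curl_x curl_y curl_z ⊢
  exact ⟨curl_x, curl_y.trans (add_right_comm _ _ _), curl_z⟩
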